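/- Let d ≥ 1, let t > 1, and let ν₀, ν₁, ν̃₁ ∈ P₂(ℝ^d). If ρ is a metric extrapolation of (ν₀, ν₁) at time t and ρ̃ is a metric extrapolation of (ν₀, ν̃₁) at time t, then W₂(ρ, ρ̃) ≤ 2t·W₂(ν₁, ν̃₁). -/

import Mathlib

/-!
Write `F` for the functional minimized by `ρ`, and take random vectors `X, Y, Y', X'` on one
probability space, with laws `ρ, ν₁, ν₁', ρ'`, whose consecutive pairs are coupled almost optimally
(up to `ε` in the quadratic cost).  Such a chain is obtained by gluing couplings along their common
marginals (`exists_glue`).  Let `m` be the law of the midpoint `(X + X') / 2`.  By the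
parallelogram identity and by gluing again,

* `W₂²(m, ν₁) ≤ E|X - Y|² / 2 + E|X' - Y|² / 2 - E|X - X'|² / 4`, and the same with `Y'`, `ν₁'`;
* `W₂²(m, ν₀) ≥ W₂²(ρ, ν₀) / 2 + W₂²(ρ', ν₀) / 2 - E|X - X'|² / 4`  (`W2sq_midpoint_ge`).

Testing the minimality of both `ρ` and `ρ'` against the competitor `m` and adding the two
inequalities, all terms with `ν₀` cancel and there remains
`E|X - X'|² ≤ 2 t (E⟪X - X', Y - Y'⟫ + 2 ε)`.  Young's inequality turns this into
`E|X - X'|² ≤ 4 t² E|Y - Y'|² + 8 t ε`, and `ε → 0` gives the claim.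
-/


open MeasureTheory

noncomputable section

variable {V : Type*} [NormedAddCommGroup V] [NormedSpace ℝ V]
  [MeasurableSpace V] [BorelSpace V]

/-- `π` is a coupling of `μ` and `ν`. -/
def IsCoupling (π : Measure (V × V)) (μ ν : Measure V) : Prop :=
  IsProbabilityMeasure π ∧ π.map Prod.fst = μ ∧ π.map Prod.snd = ν

/-- Squared 2-Wasserstein distance, as infimum of quadratic cost over couplings. -/
def W2sq (μ ν : Measure V) : ℝ :=
  sInf {c : ℝ | ∃ π : Measure (V × V), IsCoupling π μ ν ∧ c = ∫ p, ‖p.1 - p.2‖ ^ 2 ∂π}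

/-- The 2-Wasserstein distance. -/
def W2 (μ ν : Measure V) : ℝ := Real.sqrt (W2sq μ ν)

/-- `μ` is a Borel probability measure with finite second moment. -/
def IsP2 (μ : Measure V) : Prop :=
  IsProbabilityMeasure μ ∧ Integrable (fun x => ‖x‖ ^ 2) μ

/-- Convex order: `∫ φ dμ ≤ ∫ φ dν` for every convex `φ` for which both integrals exist. -/
def ConvexOrder (μ ν : Measure V) : Prop :=
  ∀ φ : V → ℝ, ConvexOn ℝ Set.univ φ → Integrable φ μ → Integrable φ ν →
    ∫ x, φ x ∂μ ≤ ∫ x, φ x ∂ν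

/-- `X` is a Borel map, square-integrable w.r.t. `ρ₀`. -/
def MemL2 (ρ₀ : Measure V) (X : V → V) : Prop :=
  Measurable X ∧ Integrable (fun x => ‖X x‖ ^ 2) ρ₀

/-- `μs` is a backward projection of `μ` onto the convex order cone below `ν`. -/
def IsBackwardProj (ν μ μs : Measure V) : Prop :=
  IsP2 μs ∧ ConvexOrder μs ν ∧
    ∀ ρ : Measure V, IsP2 ρ → ConvexOrder ρ ν → W2 μs μ ≤ W2 ρ μ

/-- `ρs` is a forward projection of `ν` above `μ`. -/
def IsForwardProj (μ ν ρs : Measure V) : Prop :=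
  IsP2 ρs ∧ ConvexOrder μ ρs ∧
    ∀ ρ : Measure V, IsP2 ρ → ConvexOrder μ ρ → W2 ρs ν ≤ W2 ρ ν

/-- `ρs` is a metric extrapolation of `(ν₀, ν₁)` at time `t`. -/
def IsMetricExtrap (t : ℝ) (ν₀ ν₁ ρs : Measure V) : Prop :=
  IsP2 ρs ∧ ∀ ρ : Measure V, IsP2 ρ →
    W2sq ρs ν₁ / (2 * (t - 1)) - W2sq ρs ν₀ / (2 * t) ≤
      W2sq ρ ν₁ / (2 * (t - 1)) - W2sq ρ ν₀ / (2 * t)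

/-- Constant-speed minimizing geodesic on `[a,b]` for `W₂`. -/
def IsGeodesic (a b : ℝ) (γ : ℝ → Measure V) : Prop :=
  (∀ s ∈ Set.Icc a b, IsP2 (γ s)) ∧
    ∀ s₁ ∈ Set.Icc a b, ∀ s₂ ∈ Set.Icc a b,
      W2 (γ s₁) (γ s₂) = |s₁ - s₂| / (b - a) * W2 (γ a) (γ b)

/-- Topological support of a measure. -/
def msupport (μ : Measure V) : Set V := {x | ∀ U ∈ nhds x, μ U ≠ 0}

/-- Regular measures: absolutely continuous, compact convex support,
density bounded above and below on the support. -/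
def IsP2reg {d : ℕ} (μ : Measure (EuclideanSpace ℝ (Fin d))) : Prop :=
  IsP2 μ ∧ μ ≪ volume ∧ IsCompact (msupport μ) ∧ Convex ℝ (msupport μ) ∧
    ∃ m M : ℝ, 0 < m ∧ 0 < M ∧
      ∀ᵐ x ∂(volume : Measure (EuclideanSpace ℝ (Fin d))),
        x ∈ msupport μ → m ≤ (μ.rnDeriv volume x).toReal ∧ (μ.rnDeriv volume x).toReal ≤ M


open ProbabilityTheory

/-- Gluing: a random element `w` with law `P` can be extended by a further coordinate `z` so that
`(f w, z)` has any prescribed law whose first marginal is the law of `f w`.  The new coordinate is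
drawn from the disintegration of the prescribed law, evaluated at `f w`. -/
lemma exists_glue {S A B : Type*} [MeasurableSpace S] [MeasurableSpace A] [MeasurableSpace B]
    [StandardBorelSpace B] [Nonempty B] (P : Measure S) [IsProbabilityMeasure P]
    {f : S → A} (hf : Measurable f) (π : Measure (A × B)) [IsProbabilityMeasure π]
    (h : P.map f = π.map Prod.fst) :
    ∃ Q : Measure (S × B), IsProbabilityMeasure Q ∧ Q.map Prod.fst = P ∧
      Q.map (fun q => (f q.1, q.2)) = π := by
  refine ⟨P ⊗ₘ (π.condKernel.comap f hf), inferInstance, Measure.fst_compProd _ _, ?_⟩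
  conv_rhs => rw [← π.disintegrate π.condKernel]
  have hm : Measurable (fun q : S × B => (f q.1, q.2)) := by fun_prop
  ext s hs
  rw [Measure.map_apply hm hs, Measure.compProd_apply (hm hs), Measure.compProd_apply hs,
    Measure.fst, ← h, lintegral_map (Kernel.measurable_kernel_prodMk_left hs) hf]
  rfl

section

variable {d : ℕ}

local notation "E" => EuclideanSpace ℝ (Fin d)

lemma W2sq_bddBelow (μ ν : Measure E) :
    BddBelow {c : ℝ | ∃ π : Measure (E × E), IsCoupling π μ ν ∧ c = ∫ p, ‖p.1 - p.2‖ ^ 2 ∂π} := by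
  refine ⟨0, ?_⟩
  rintro c ⟨π, -, rfl⟩
  positivity

lemma W2sq_nonempty (μ ν : Measure E) [IsProbabilityMeasure μ] [IsProbabilityMeasure ν] :
    {c : ℝ | ∃ π : Measure (E × E), IsCoupling π μ ν ∧
      c = ∫ p, ‖p.1 - p.2‖ ^ 2 ∂π}.Nonempty :=
  ⟨_, μ.prod ν, ⟨inferInstance, Measure.fst_prod, Measure.snd_prod⟩, rfl⟩

lemma W2sq_nonneg (μ ν : Measure E) : 0 ≤ W2sq μ ν := by
  refine Real.sInf_nonneg ?_
  rintro c ⟨π, -, rfl⟩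
  positivity

lemma exists_coupling_lt (μ ν : Measure E) [IsProbabilityMeasure μ] [IsProbabilityMeasure ν]
    {ε : ℝ} (hε : 0 < ε) :
    ∃ π : Measure (E × E), IsCoupling π μ ν ∧ ∫ p, ‖p.1 - p.2‖ ^ 2 ∂π < W2sq μ ν + ε := by
  obtain ⟨c, ⟨π, hπ, rfl⟩, hc⟩ := Real.lt_sInf_add_pos (W2sq_nonempty μ ν) hε
  exact ⟨π, hπ, hc⟩

lemma integral_map_pair {Ω : Type*} [MeasurableSpace Ω] (P : Measure Ω)
    {X Y : Ω → E} (hX : Measurable X) (hY : Measurable Y) :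
    ∫ p, ‖p.1 - p.2‖ ^ 2 ∂(P.map fun w => (X w, Y w)) = ∫ w, ‖X w - Y w‖ ^ 2 ∂P :=
  integral_map (hX.prodMk hY).aemeasurable
    (by fun_prop : Measurable fun p : E × E => ‖p.1 - p.2‖ ^ 2).aestronglyMeasurable

lemma W2sq_le_integral {Ω : Type*} [MeasurableSpace Ω] (P : Measure Ω) [IsProbabilityMeasure P]
    {X Y : Ω → E} (hX : Measurable X) (hY : Measurable Y) :
    W2sq (P.map X) (P.map Y) ≤ ∫ w, ‖X w - Y w‖ ^ 2 ∂P := by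
  refine csInf_le (W2sq_bddBelow _ _) ⟨P.map fun w => (X w, Y w), ⟨?_, ?_, ?_⟩, ?_⟩
  · exact Measure.isProbabilityMeasure_map (hX.prodMk hY).aemeasurable
  · rw [Measure.map_map measurable_fst (hX.prodMk hY)]; rfl
  · rw [Measure.map_map measurable_snd (hX.prodMk hY)]; rfl
  · rw [integral_map_pair P hX hY]

lemma memLp_of_isP2_map {Ω : Type*} [MeasurableSpace Ω] {P : Measure Ω}
    {X : Ω → E} (hX : Measurable X) (h : IsP2 (P.map X)) : MemLp X 2 P := by
  rw [memLp_two_iff_integrable_sq_norm hX.aestronglyMeasurable]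
  exact h.2.comp_measurable hX

lemma isP2_map {Ω : Type*} [MeasurableSpace Ω] {P : Measure Ω} [IsProbabilityMeasure P]
    {X : Ω → E} (hX : Measurable X) (h : MemLp X 2 P) : IsP2 (P.map X) := by
  refine ⟨Measure.isProbabilityMeasure_map hX.aemeasurable, ?_⟩
  rw [integrable_map_measure (by fun_prop) hX.aemeasurable]
  exact (memLp_two_iff_integrable_sq_norm hX.aestronglyMeasurable).1 h

lemma integrable_normSq_sub {Ω : Type*} [MeasurableSpace Ω] {P : Measure Ω}
    {X Y : Ω → E} (hX : MemLp X 2 P) (hY : MemLp Y 2 P) :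
    Integrable (fun w => ‖X w - Y w‖ ^ 2) P :=
  (memLp_two_iff_integrable_sq_norm (hX.sub hY).1).1 (hX.sub hY)

lemma normSq_midpoint_sub (x y z : E) :
    ‖(2⁻¹ : ℝ) • (x + y) - z‖ ^ 2
      = ‖x - z‖ ^ 2 / 2 + ‖y - z‖ ^ 2 / 2 - ‖x - y‖ ^ 2 / 4 := by
  have h := parallelogram_law_with_norm ℝ (x - z) (y - z)
  have h1 : (2⁻¹ : ℝ) • (x + y) - z = (2⁻¹ : ℝ) • ((x - z) + (y - z)) := by module
  have h2 : (x - z) - (y - z) = x - y := by abel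
  rw [h2] at h
  rw [h1, norm_smul, mul_pow]
  norm_num
  linarith

lemma integral_normSq_midpoint_sub {Ω : Type*} [MeasurableSpace Ω] {P : Measure Ω}
    {X Y Z : Ω → E} (hX : MemLp X 2 P) (hY : MemLp Y 2 P) (hZ : MemLp Z 2 P) :
    ∫ w, ‖(2⁻¹ : ℝ) • (X w + Y w) - Z w‖ ^ 2 ∂P
      = (∫ w, ‖X w - Z w‖ ^ 2 ∂P) / 2 + (∫ w, ‖Y w - Z w‖ ^ 2 ∂P) / 2
        - (∫ w, ‖X w - Y w‖ ^ 2 ∂P) / 4 := by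
  have a := (integrable_normSq_sub hX hZ).div_const 2
  have b := (integrable_normSq_sub hY hZ).div_const 2
  have c := (integrable_normSq_sub hX hY).div_const 4
  simp_rw [normSq_midpoint_sub]
  rw [integral_sub (by exact a.add b) c, integral_add a b, integral_div, integral_div, integral_div]

/-- Semiconcavity of the squared distance to `ν` along midpoints of an arbitrary coupling. Given any
coupling of the law of the midpoint with `ν`, gluing realizes its second coordinate on the same
space as `X` and `Y`, where the parallelogram identity applies. -/
lemma W2sq_midpoint_ge {Ω : Type*} [MeasurableSpace Ω] (P : Measure Ω) [IsProbabilityMeasure P]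
    {X Y : Ω → E} (hX : Measurable X) (hY : Measurable Y) (hX2 : MemLp X 2 P) (hY2 : MemLp Y 2 P)
    {ν : Measure E} (hν : IsP2 ν) :
    W2sq (P.map X) ν / 2 + W2sq (P.map Y) ν / 2 - (∫ w, ‖X w - Y w‖ ^ 2 ∂P) / 4
      ≤ W2sq (P.map fun w => (2⁻¹ : ℝ) • (X w + Y w)) ν := by
  have hM : Measurable fun w => (2⁻¹ : ℝ) • (X w + Y w) := by fun_prop
  have := hν.1
  have := Measure.isProbabilityMeasure_map (μ := P) hM.aemeasurable
  refine le_csInf (W2sq_nonempty _ _) ?_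
  rintro c ⟨π, ⟨hπ, hπ1, hπ2⟩, rfl⟩
  obtain ⟨Q, hQ, hQ1, hQ2⟩ := exists_glue P hM π hπ1.symm
  have hfst : MeasurePreserving Prod.fst Q P := ⟨measurable_fst, hQ1⟩
  have hZ : Q.map Prod.snd = ν := by
    rw [← hπ2, ← hQ2, Measure.map_map measurable_snd (by fun_prop)]; rfl
  have hX' : Q.map (fun q => X q.1) = P.map X := by
    rw [← hQ1, Measure.map_map hX measurable_fst]; rfl
  have hY' : Q.map (fun q => Y q.1) = P.map Y := by
    rw [← hQ1, Measure.map_map hY measurable_fst]; rfl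
  have hXQ : MemLp (fun q : Ω × E => X q.1) 2 Q := hX2.comp_measurePreserving hfst
  have hYQ : MemLp (fun q : Ω × E => Y q.1) 2 Q := hY2.comp_measurePreserving hfst
  have hZQ : MemLp (Prod.snd : Ω × E → E) 2 Q :=
    memLp_of_isP2_map measurable_snd (by rw [hZ]; exact hν)
  have i1 := W2sq_le_integral Q (hX.comp measurable_fst) (measurable_snd (α := Ω) (β := E))
  have i2 := W2sq_le_integral Q (hY.comp measurable_fst) (measurable_snd (α := Ω) (β := E))
  have i3 : ∫ w, ‖X w - Y w‖ ^ 2 ∂P = ∫ q, ‖X q.1 - Y q.1‖ ^ 2 ∂Q := by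
    rw [← hQ1]
    exact integral_map (by fun_prop)
      (by fun_prop : Measurable fun w => ‖X w - Y w‖ ^ 2).aestronglyMeasurable
  have i4 := integral_map_pair Q (X := fun q : Ω × E => (2⁻¹ : ℝ) • (X q.1 + Y q.1))
    (Y := Prod.snd) (by fun_prop) measurable_snd
  rw [hQ2, integral_normSq_midpoint_sub hXQ hYQ hZQ] at i4
  simp only [Function.comp_def] at i1 i2
  rw [hZ, hX'] at i1
  rw [hZ, hY'] at i2
  linarith

/-- Four measures with prescribed couplings of consecutive pairs can be realized as the laws of
four random vectors on one probability space. -/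
lemma exists_chain {μ₁ μ₂ μ₃ μ₄ : Measure E} {π₁ π₂ π₃ : Measure (E × E)}
    (h₁ : IsCoupling π₁ μ₁ μ₂) (h₂ : IsCoupling π₂ μ₂ μ₃) (h₃ : IsCoupling π₃ μ₃ μ₄) :
    ∃ (Q : Measure (((E × E) × E) × E)), IsProbabilityMeasure Q ∧
      Q.map (fun q => (q.1.1.1, q.1.1.2)) = π₁ ∧ Q.map (fun q => (q.1.1.2, q.1.2)) = π₂ ∧
      Q.map (fun q => (q.1.2, q.2)) = π₃ := by
  obtain ⟨p₁, -, b₁⟩ := h₁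
  obtain ⟨p₂, a₂, b₂⟩ := h₂
  obtain ⟨p₃, a₃, -⟩ := h₃
  obtain ⟨R, hR, hR1, hR2⟩ := exists_glue π₁ measurable_snd π₂ (b₁.trans a₂.symm)
  have hR3 : R.map Prod.snd = π₃.map Prod.fst := by
    rw [a₃, ← b₂, ← hR2, Measure.map_map measurable_snd (by fun_prop)]; rfl
  obtain ⟨Q, hQ, hQ1, hQ2⟩ := exists_glue R measurable_snd π₃ hR3
  refine ⟨Q, hQ, ?_, ?_, hQ2⟩
  · rw [← hR1, ← hQ1, Measure.map_map measurable_fst measurable_fst]; rfl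
  · rw [← hR2, ← hQ1, Measure.map_map (by fun_prop) measurable_fst]; rfl

lemma isCoupling_swap {π : Measure (E × E)} {μ ν : Measure E} (h : IsCoupling π μ ν) :
    IsCoupling (π.map Prod.swap) ν μ := by
  obtain ⟨h0, h1, h2⟩ := h
  refine ⟨Measure.isProbabilityMeasure_map measurable_swap.aemeasurable, ?_, ?_⟩
  · rw [Measure.map_map measurable_fst measurable_swap]; exact h2
  · rw [Measure.map_map measurable_snd measurable_swap]; exact h1

/-- Young's inequality applied to `2 t ⟪x - x', y - y'⟫`, the inner product being written through
squared distances. -/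
lemma young_cross (t : ℝ) (x y y' x' : E) :
    t * (‖x' - y‖ ^ 2 + ‖x - y'‖ ^ 2 - ‖x - y‖ ^ 2 - ‖x' - y'‖ ^ 2)
      ≤ ‖x - x'‖ ^ 2 / 2 + 2 * t ^ 2 * ‖y - y'‖ ^ 2 := by
  have h : 0 ≤ ‖(x - x') - (2 * t) • (y - y')‖ ^ 2 := by positivity
  simp only [← real_inner_self_eq_norm_sq, inner_sub_left, inner_sub_right, inner_smul_left,
    inner_smul_right, conj_trivial] at h ⊢
  simp only [real_inner_comm x y, real_inner_comm x y', real_inner_comm x' y,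
    real_inner_comm x' y', real_inner_comm x x', real_inner_comm y y'] at h ⊢
  linarith

/-- The minimality of `μ` tested against the law of the midpoint of `X` and `X'`. -/
lemma extrap_midpoint {Ω : Type*} [MeasurableSpace Ω] (P : Measure Ω) [IsProbabilityMeasure P]
    {t : ℝ} (ht : 1 < t) {ν₀ ν μ μ' : Measure E} (hν₀ : IsP2 ν₀)
    (hμ : IsMetricExtrap t ν₀ ν μ) {X X' Y : Ω → E}
    (hX : Measurable X) (hX' : Measurable X') (hY : Measurable Y)
    (hX2 : MemLp X 2 P) (hX2' : MemLp X' 2 P) (hY2 : MemLp Y 2 P)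
    (eX : P.map X = μ) (eX' : P.map X' = μ') (eY : P.map Y = ν) :
    t * W2sq μ ν - (t - 1) * W2sq μ ν₀ ≤
      t * ((∫ w, ‖X w - Y w‖ ^ 2 ∂P) / 2 + (∫ w, ‖X' w - Y w‖ ^ 2 ∂P) / 2
          - (∫ w, ‖X w - X' w‖ ^ 2 ∂P) / 4)
        - (t - 1) * (W2sq μ ν₀ / 2 + W2sq μ' ν₀ / 2 - (∫ w, ‖X w - X' w‖ ^ 2 ∂P) / 4) := by
  have hM : Measurable fun w => (2⁻¹ : ℝ) • (X w + X' w) := by fun_prop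
  have hM2 : MemLp (fun w => (2⁻¹ : ℝ) • (X w + X' w)) 2 P :=
    (hX2.add hX2').const_smul (2⁻¹ : ℝ)
  have h1 := hμ.2 _ (isP2_map hM hM2)
  have h2 := W2sq_le_integral P hM hY
  rw [integral_normSq_midpoint_sub hX2 hX2' hY2, eY] at h2
  have h3 := W2sq_midpoint_ge P hX hX' hX2 hX2' hν₀
  rw [eX, eX'] at h3
  have ht0 : 0 < t := by linarith
  have ht1 : 0 < t - 1 := by linarith
  have key : ∀ a b : ℝ, a / (2 * (t - 1)) - b / (2 * t)
      = (t * a - (t - 1) * b) / (2 * t * (t - 1)) := by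
    intro a b; field_simp
  rw [key, key, div_le_div_iff_of_pos_right (by positivity)] at h1
  have h4 := mul_le_mul_of_nonneg_left h2 ht0.le
  have h5 := mul_le_mul_of_nonneg_left h3 ht1.le
  linarith

lemma W2sq_extrap_le {t : ℝ} (ht : 1 < t) {ν₀ ν₁ ν₁' ρ ρ' : Measure E}
    (hν₀ : IsP2 ν₀) (hν₁ : IsP2 ν₁) (hν₁' : IsP2 ν₁')
    (hρ : IsMetricExtrap t ν₀ ν₁ ρ) (hρ' : IsMetricExtrap t ν₀ ν₁' ρ') :
    W2sq ρ ρ' ≤ 4 * t ^ 2 * W2sq ν₁ ν₁' := by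
  have := hν₁.1
  have := hν₁'.1
  have := hρ.1.1
  have := hρ'.1.1
  have ht0 : 0 < t := by linarith
  refine le_of_forall_pos_le_add fun δ hδ => ?_
  -- `ε` is chosen so that the total error `4 t² ε + 8 t ε` equals `δ`.
  obtain ⟨ε, hε, hεδ⟩ : ∃ ε : ℝ, 0 < ε ∧ 4 * t ^ 2 * ε + 8 * t * ε = δ :=
    ⟨δ / (4 * t ^ 2 + 8 * t), by positivity, by field_simp⟩
  obtain ⟨π₁, c₁, l₁⟩ := exists_coupling_lt ρ ν₁ hε
  obtain ⟨π₂, c₂, l₂⟩ := exists_coupling_lt ν₁ ν₁' hε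
  obtain ⟨π₃, c₃, l₃⟩ := exists_coupling_lt ρ' ν₁' hε
  obtain ⟨Q, hQ, q₁, q₂, q₃⟩ := exists_chain c₁ c₂ (isCoupling_swap c₃)
  let X : ((E × E) × E) × E → E := fun q => q.1.1.1
  let Y : ((E × E) × E) × E → E := fun q => q.1.1.2
  let Y' : ((E × E) × E) × E → E := fun q => q.1.2
  let X' : ((E × E) × E) × E → E := fun q => q.2
  have mX : Measurable X := by fun_prop
  have mY : Measurable Y := by fun_prop
  have mY' : Measurable Y' := by fun_prop
  have mX' : Measurable X' := by fun_prop
  have eX : Q.map X = ρ := by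
    rw [← c₁.2.1, ← q₁, Measure.map_map measurable_fst (by fun_prop)]; rfl
  have eY : Q.map Y = ν₁ := by
    rw [← c₁.2.2, ← q₁, Measure.map_map measurable_snd (by fun_prop)]; rfl
  have eY' : Q.map Y' = ν₁' := by
    rw [← c₂.2.2, ← q₂, Measure.map_map measurable_snd (by fun_prop)]; rfl
  have eX' : Q.map X' = ρ' := by
    rw [← (isCoupling_swap c₃).2.2, ← q₃, Measure.map_map measurable_snd (by fun_prop)]; rfl
  have lX : MemLp X 2 Q := memLp_of_isP2_map mX (eX ▸ hρ.1)
  have lY : MemLp Y 2 Q := memLp_of_isP2_map mY (eY ▸ hν₁)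
  have lY' : MemLp Y' 2 Q := memLp_of_isP2_map mY' (eY' ▸ hν₁')
  have lX' : MemLp X' 2 Q := memLp_of_isP2_map mX' (eX' ▸ hρ'.1)
  have k₁ : ∫ q, ‖X q - Y q‖ ^ 2 ∂Q < W2sq ρ ν₁ + ε := by
    rw [← integral_map_pair Q mX mY]; exact q₁ ▸ l₁
  have k₂ : ∫ q, ‖Y q - Y' q‖ ^ 2 ∂Q < W2sq ν₁ ν₁' + ε := by
    rw [← integral_map_pair Q mY mY']; exact q₂ ▸ l₂
  have q₃' : Q.map (fun q => (X' q, Y' q)) = π₃ := by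
    have : π₃ = (π₃.map Prod.swap).map Prod.swap := by
      rw [Measure.map_map measurable_swap measurable_swap, Prod.swap_swap_eq, Measure.map_id]
    rw [this, ← q₃, Measure.map_map measurable_swap (by fun_prop)]; rfl
  have k₃ : ∫ q, ‖X' q - Y' q‖ ^ 2 ∂Q < W2sq ρ' ν₁' + ε := by
    rw [← integral_map_pair Q mX' mY']; exact q₃' ▸ l₃
  have m₁ := extrap_midpoint Q ht hν₀ hρ mX mX' mY lX lX' lY eX eX' eY
  have m₂ := extrap_midpoint Q ht hν₀ hρ' mX' mX mY' lX' lX lY' eX' eX eY'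
  have sym : ∫ q, ‖X' q - X q‖ ^ 2 ∂Q = ∫ q, ‖X q - X' q‖ ^ 2 ∂Q := by
    simp_rw [norm_sub_rev]
  rw [sym] at m₂
  have yg : t * (∫ q, ‖X' q - Y q‖ ^ 2 ∂Q + ∫ q, ‖X q - Y' q‖ ^ 2 ∂Q
        - ∫ q, ‖X q - Y q‖ ^ 2 ∂Q - ∫ q, ‖X' q - Y' q‖ ^ 2 ∂Q)
      ≤ (∫ q, ‖X q - X' q‖ ^ 2 ∂Q) / 2 + 2 * t ^ 2 * ∫ q, ‖Y q - Y' q‖ ^ 2 ∂Q := by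
    have i1 := integrable_normSq_sub lX' lY
    have i2 := integrable_normSq_sub lX lY'
    have i3 := integrable_normSq_sub lX lY
    have i4 := integrable_normSq_sub lX' lY'
    have i5 := (integrable_normSq_sub lX lX').div_const 2
    have i6 := (integrable_normSq_sub lY lY').const_mul (2 * t ^ 2)
    have := integral_mono ((((i1.add i2).sub i3).sub i4).const_mul t) (i5.add i6)
      (fun q => young_cross t (X q) (Y q) (Y' q) (X' q))
    simp only [Pi.add_apply, Pi.sub_apply] at this
    rwa [integral_const_mul, integral_sub, integral_sub, integral_add i1 i2, integral_add i5 i6,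
      integral_div, integral_const_mul] at this
    exacts [i1.add i2, i3, (i1.add i2).sub i3, i4]
  have fin := W2sq_le_integral Q mX mX'
  rw [eX, eX'] at fin
  have e₁ := mul_le_mul_of_nonneg_left k₁.le ht0.le
  have e₃ := mul_le_mul_of_nonneg_left k₃.le ht0.le
  have e₂ := mul_le_mul_of_nonneg_left k₂.le (by positivity : 0 ≤ 4 * t ^ 2)
  linarith

end

/-- Lipschitz stability of the metric extrapolation in its second argument. -/
theorem stmt5 {d : ℕ} (hd : 1 ≤ d) (t : ℝ) (ht : 1 < t)
    (ν₀ ν₁ ν₁' ρ ρ' : Measure (EuclideanSpace ℝ (Fin d)))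
    (hν₀ : IsP2 ν₀) (hν₁ : IsP2 ν₁) (hν₁' : IsP2 ν₁')
    (hρ : IsMetricExtrap t ν₀ ν₁ ρ) (hρ' : IsMetricExtrap t ν₀ ν₁' ρ') :
    W2 ρ ρ' ≤ 2 * t * W2 ν₁ ν₁' := by
  have h := W2sq_extrap_le ht hν₀ hν₁ hν₁' hρ hρ'
  refine Real.sqrt_le_iff.2 ⟨mul_nonneg (by linarith) (Real.sqrt_nonneg _), ?_⟩
  rw [W2, mul_pow, Real.sq_sqrt (W2sq_nonneg _ _)]
  linarith

end
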